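/- arXiv:2604.07718 — 2 statements merged into one kernel-verified Lean document; each statement's English description precedes it below -/
import Mathlib

section
/- Let p ≥ 1, let f : ℝ^p → ℝ^p be a piecewise affine function with associated matrices Φ⁽¹⁾, …, Φ⁽ᴸ⁾ ∈ ℝ^{p×p}, and let K : ℝ^p → ℝ be a measurable non-negative function with ∫_{ℝ^p} K(u) du = 1 and ∫_{ℝ^p} ‖u‖ K(u) du < ∞. Then f_K(z) := ∫_{ℝ^p} f(z + u) K(u) du is well defined for every z ∈ ℝ^p, and for every x′, x″ ∈ ℝ^p there exists a matrix M in the convex hull of {Φ⁽¹⁾, …, Φ⁽ᴸ⁾} such that f_K(x″) − f_K(x′) = M(x″ − x′). -/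
open MeasureTheory Matrix

noncomputable section

abbrev E (n : ℕ) : Type := EuclideanSpace ℝ (Fin n)

def mulVecE {m n : ℕ} (A : Matrix (Fin m) (Fin n) ℝ) (x : E n) : E m := WithLp.toLp 2 (A.mulVec x)

/-- A (continuous) piecewise affine function `f` with regimes `Z`, intercepts `φ`
and coefficient matrices `Φ`: the regimes are convex, nonempty, and partition `ℝ^p`,
and `f z = φ ℓ + Φ ℓ z` on the regime `Z ℓ`. -/
def IsPiecewiseAffine {p L : ℕ} (f : E p → E p) (Z : Fin L → Set (E p))
    (φ : Fin L → E p) (Φ : Fin L → Matrix (Fin p) (Fin p) ℝ) : Prop :=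
  Continuous f ∧ (∀ ℓ, Convex ℝ (Z ℓ)) ∧ (∀ ℓ, (Z ℓ).Nonempty) ∧
    (∀ z : E p, ∃! ℓ, z ∈ Z ℓ) ∧
    ∀ ℓ, ∀ z ∈ Z ℓ, f z = φ ℓ + mulVecE (Φ ℓ) z

/-- The cone `C_I` determined by the vectors `a` and the index set `I`. -/
def coneOf {p : ℕ} (a : Fin p → E p) (I : Set (Fin p)) : Set (E p) :=
  {z | (∀ i ∈ I, 0 ≤ ∑ j, a i j * z j) ∧ (∀ i ∉ I, (∑ j, a i j * z j) < 0)}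

/-- A (continuous) piecewise linear function: piecewise affine with zero intercepts, where each
regime is a union of cones `C_I` determined by a fixed basis `a₁, …, a_p` of `ℝ^p`. -/
def IsPiecewiseLinear {p L : ℕ} (f : E p → E p) (Z : Fin L → Set (E p))
    (φ : Fin L → E p) (Φ : Fin L → Matrix (Fin p) (Fin p) ℝ) : Prop :=
  IsPiecewiseAffine f Z φ Φ ∧ (∀ ℓ, φ ℓ = 0) ∧
    ∃ a : Fin p → E p, LinearIndependent ℝ a ∧ Submodule.span ℝ (Set.range a) = ⊤ ∧
      ∀ ℓ, ∃ S : Set (Set (Fin p)), Z ℓ = ⋃ I ∈ S, coneOf a I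

/-- A (continuous) threshold affine function: piecewise affine, whose regimes are the bands
`{z : τ_{ℓ-1} < aᵀz ≤ τ_ℓ}` for some `a ≠ 0` and thresholds `-∞ = τ₀ < τ₁ < ⋯ < τ_L = +∞`. -/
def IsThresholdAffine {p L : ℕ} (f : E p → E p) (Z : Fin L → Set (E p))
    (φ : Fin L → E p) (Φ : Fin L → Matrix (Fin p) (Fin p) ℝ) : Prop :=
  IsPiecewiseAffine f Z φ Φ ∧
    ∃ a : E p, a ≠ 0 ∧ ∃ τ : Fin (L + 1) → EReal, StrictMono τ ∧
      τ 0 = ⊥ ∧ τ (Fin.last L) = ⊤ ∧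
      ∀ ℓ : Fin L, Z ℓ =
        {z : E p | τ ℓ.castSucc < ((∑ j, a j * z j : ℝ) : EReal) ∧
          ((∑ j, a j * z j : ℝ) : EReal) ≤ τ ℓ.succ}

/-!
At each point of the segment from `x` to `y`, finiteness of the set of pieces makes one affine
piece recur arbitrarily close on the right, and continuity puts the point itself on that piece, so
there are arbitrarily short chords whose slope is one of the vectors `Φ ℓ (y - x)`. A mean value
inequality for each continuous linear functional, together with Hahn–Banach separation, then
places `f y - f x` in the convex hull of these vectors. All translates of the segment share this
closed convex set, so the increment averaged against a probability measure lies in it too.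
-/

open Filter Set Topology
open scoped NNReal

lemma slope_mem_of_frequently_slope_mem {W : Type*} [AddCommGroup W] [Module ℝ W]
    [TopologicalSpace W] [IsTopologicalAddGroup W] [ContinuousSMul ℝ W] [LocallyConvexSpace ℝ W]
    {C : Set W} (hC : Convex ℝ C) (hC_closed : IsClosed C) {h : ℝ → W} {a b : ℝ} (hab : a < b)
    (hh : ContinuousOn h (Icc a b)) (hslope : ∀ s ∈ Ico a b, ∃ᶠ t in 𝓝[>] s, slope h s t ∈ C) :
    slope h a b ∈ C := by
  by_contra hnot
  obtain ⟨c, r, hc, hr⟩ := geometric_hahn_banach_closed_point hC hC_closed hnot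
  have slope_comp (s t : ℝ) : slope (c ∘ h) s t = c (slope h s t) := by
    simp [slope_def_module]
  have hline (t : ℝ) : HasDerivAt (fun t ↦ c (h a) + (t - a) * r) r t := by
    simpa using (((hasDerivAt_id t).sub_const a).mul_const r).const_add (c (h a))
  have hfence : c (h b) ≤ c (h a) + (b - a) * r := by
    refine image_le_of_liminf_slope_right_le_deriv_boundary
      (c.continuous.comp_continuousOn hh) (by simp) (by fun_prop)
      (fun t _ ↦ (hline t).hasDerivWithinAt) (fun s hs q hq ↦ ?_) (right_mem_Icc.2 hab.le)
    refine (hslope s hs).mono fun t ht ↦ ?_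
    rw [slope_comp]
    exact (hc _ ht).trans hq
  have hchord : slope (c ∘ h) a b ≤ r := by
    rw [slope_def_field, div_le_iff₀ (sub_pos.2 hab), sub_le_iff_le_add']
    simpa only [Function.comp_apply, mul_comm r] using hfence
  exact hr.not_ge (slope_comp a b ▸ hchord)

/-- `f` is a selection of the affine maps `z ↦ φ i + Φ i z`: at each point it takes the value of one
of them. Nothing is recorded about the regions where a given map is selected. -/
def IsAffineSelection {V W ι : Type*} [AddCommGroup V] [Module ℝ V] [TopologicalSpace V]
    [AddCommGroup W] [Module ℝ W] [TopologicalSpace W] (f : V → W) (φ : ι → W)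
    (Φ : ι → V →L[ℝ] W) : Prop :=
  ∀ z, ∃ i, f z = φ i + Φ i z

namespace IsAffineSelection

section Increment

variable {V W ι : Type*} [AddCommGroup V] [Module ℝ V] [TopologicalSpace V] [ContinuousAdd V]
  [ContinuousSMul ℝ V] [AddCommGroup W] [Module ℝ W] [TopologicalSpace W]
  [IsTopologicalAddGroup W] [T2Space W] [Finite ι]
  {f : V → W} {φ : ι → W} {Φ : ι → V →L[ℝ] W}

lemma exists_frequently_slope_eq (hsel : IsAffineSelection f φ Φ) (hf : Continuous f) (x v : V)
    (s : ℝ) : ∃ i, ∃ᶠ t in 𝓝[>] s, slope (fun t : ℝ ↦ f (x + t • v)) s t = Φ i v := by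
  obtain ⟨i, hi⟩ : ∃ i, ∃ᶠ t in 𝓝[>] s, f (x + t • v) = φ i + Φ i (x + t • v) :=
    frequently_exists.1 (Frequently.of_forall fun t ↦ hsel (x + t • v))
  have hclosed : IsClosed {t : ℝ | f (x + t • v) = φ i + Φ i (x + t • v)} :=
    isClosed_eq (by fun_prop) (by fun_prop)
  have hs : f (x + s • v) = φ i + Φ i (x + s • v) :=
    hclosed.mem_of_frequently_of_tendsto hi (tendsto_id.mono_left nhdsWithin_le_nhds)
  refine ⟨i, (hi.and_eventually self_mem_nhdsWithin).mono fun t ⟨ht, hst⟩ ↦ ?_⟩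
  rw [slope_def_module, ht, hs, add_sub_add_left_eq_sub, ← map_sub, add_sub_add_left_eq_sub,
    ← sub_smul, map_smul, inv_smul_smul₀ (sub_pos.2 hst).ne']

lemma sub_mem_convexHull [ContinuousSMul ℝ W] [LocallyConvexSpace ℝ W]
    (hsel : IsAffineSelection f φ Φ) (hf : Continuous f) (x y : V) :
    f y - f x ∈ convexHull ℝ (range fun i ↦ Φ i (y - x)) := by
  have hslope : slope (fun t : ℝ ↦ f (x + t • (y - x))) 0 1 ∈
      convexHull ℝ (range fun i ↦ Φ i (y - x)) := by
    refine slope_mem_of_frequently_slope_mem (convex_convexHull ℝ _)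
      ((finite_range _).isClosed_convexHull ℝ) one_pos (by fun_prop) fun s _ ↦ ?_
    obtain ⟨i, hi⟩ := hsel.exists_frequently_slope_eq hf x (y - x) s
    exact hi.mono fun t ht ↦ ht ▸ subset_convexHull ℝ _ (mem_range_self i)
  simpa [slope_def_module] using hslope

end Increment

section Smoothing

variable {V W ι : Type*} [NormedAddCommGroup V] [NormedSpace ℝ V] [NormedAddCommGroup W]
  [NormedSpace ℝ W] [Finite ι] {f : V → W} {φ : ι → W} {Φ : ι → V →L[ℝ] W}

lemma exists_norm_le_mul_one_add_norm (hsel : IsAffineSelection f φ Φ) :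
    ∃ C, ∀ z, ‖f z‖ ≤ C * (1 + ‖z‖) := by
  obtain ⟨C, hC⟩ := (finite_range fun i ↦ max ‖φ i‖ ‖Φ i‖).bddAbove
  refine ⟨C, fun z ↦ ?_⟩
  obtain ⟨i, hi⟩ := hsel z
  obtain ⟨hφ, hΦ⟩ := max_le_iff.1 (hC (mem_range_self i))
  calc ‖f z‖ ≤ ‖φ i‖ + ‖Φ i‖ * ‖z‖ := hi ▸ norm_add_le_of_le le_rfl ((Φ i).le_opNorm z)
    _ ≤ C + C * ‖z‖ := by gcongr
    _ = C * (1 + ‖z‖) := by ring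

variable [MeasurableSpace V] [OpensMeasurableSpace V] [SecondCountableTopologyEither V W]
  {μ : Measure V}

lemma integrable_comp_add [IsFiniteMeasure μ] (hsel : IsAffineSelection f φ Φ)
    (hf : Continuous f) (hμ : Integrable (fun u ↦ ‖u‖) μ) (z : V) :
    Integrable (fun u ↦ f (z + u)) μ := by
  have hsel_add : IsAffineSelection (fun u ↦ f (z + u)) (fun i ↦ φ i + Φ i z) Φ := fun u ↦
    (hsel (z + u)).imp fun i hi ↦ by simpa only [map_add, add_assoc] using hi
  obtain ⟨C, hC⟩ := hsel_add.exists_norm_le_mul_one_add_norm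
  exact (((integrable_const 1).add hμ).const_mul C).mono'
    (Continuous.aestronglyMeasurable (by fun_prop)) (.of_forall hC)

lemma exists_mem_convexHull_integral_sub_integral_eq [CompleteSpace W] [IsProbabilityMeasure μ]
    (hsel : IsAffineSelection f φ Φ) (hf : Continuous f)
    (hμ : Integrable (fun u ↦ ‖u‖) μ) (x y : V) :
    ∃ M ∈ convexHull ℝ (range Φ), ∫ u, f (y + u) ∂μ - ∫ u, f (x + u) ∂μ = M (y - x) := by
  have hint := hsel.integrable_comp_add hf hμ
  have hmem : ∫ u, (f (y + u) - f (x + u)) ∂μ ∈ convexHull ℝ (range fun i ↦ Φ i (y - x)) := by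
    refine (convex_convexHull ℝ _).integral_mem ((finite_range _).isClosed_convexHull ℝ)
      (.of_forall fun u ↦ ?_) ((hint y).sub (hint x))
    simpa only [add_sub_add_right_eq_sub] using hsel.sub_mem_convexHull hf (x + u) (y + u)
  have himage : convexHull ℝ (range fun i ↦ Φ i (y - x)) =
      (fun M : V →L[ℝ] W ↦ M (y - x)) '' convexHull ℝ (range Φ) := by
    rw [IsLinearMap.image_convexHull ⟨fun _ _ ↦ rfl, fun _ _ ↦ rfl⟩, ← range_comp']
  rw [integral_sub (hint y) (hint x), himage] at hmem
  obtain ⟨M, hM, hMd⟩ := hmem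
  exact ⟨M, hM, hMd.symm⟩

end Smoothing

end IsAffineSelection

lemma isProbabilityMeasure_withDensity_of_integral_eq_one {X : Type*} [MeasurableSpace X]
    {μ : Measure X} {k : X → ℝ≥0} (hk : ∫ x, (k x : ℝ) ∂μ = 1) :
    IsProbabilityMeasure (μ.withDensity fun x ↦ k x) := by
  have hkint : Integrable (fun x ↦ (k x : ℝ)) μ := .of_integral_ne_zero (by simp [hk])
  refine ⟨?_⟩
  rw [withDensity_apply _ .univ, Measure.restrict_univ, lintegral_coe_eq_integral k hkint, hk,
    ENNReal.ofReal_one]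

theorem smoothed_piecewise_affine_convex_hull_difference_general {V W ι : Type*}
    [NormedAddCommGroup V] [NormedSpace ℝ V] [NormedAddCommGroup W] [NormedSpace ℝ W]
    [CompleteSpace W] [Finite ι] [MeasurableSpace V] [OpensMeasurableSpace V]
    [SecondCountableTopologyEither V W] {μ : Measure V} {f : V → W} {φ : ι → W}
    {Φ : ι → V →L[ℝ] W} (hsel : IsAffineSelection f φ Φ) (hf : Continuous f)
    {K : V → ℝ} (hKpos : ∀ u, 0 ≤ K u) (hKone : ∫ u, K u ∂μ = 1)
    (hKnorm : Integrable (fun u ↦ ‖u‖ * K u) μ) :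
    (∀ z, Integrable (fun u ↦ K u • f (z + u)) μ) ∧
    ∀ x' x'', ∃ M ∈ convexHull ℝ (range Φ),
      ∫ u, K u • f (x'' + u) ∂μ - ∫ u, K u • f (x' + u) ∂μ = M (x'' - x') := by
  lift K to V → ℝ≥0 using hKpos
  have hKint : Integrable (fun u ↦ (K u : ℝ)) μ := .of_integral_ne_zero (by simp [hKone])
  have hKmeas : AEMeasurable K μ := by simpa using hKint.aemeasurable.real_toNNReal
  have := isProbabilityMeasure_withDensity_of_integral_eq_one hKone
  have hnorm : Integrable (fun u ↦ ‖u‖) (μ.withDensity fun u ↦ K u) := by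
    simpa [integrable_withDensity_iff_integrable_smul₀ hKmeas, NNReal.smul_def, mul_comm]
      using hKnorm
  have hint := hsel.integrable_comp_add hf hnorm
  have hdiff := hsel.exists_mem_convexHull_integral_sub_integral_eq hf hnorm
  simp only [integrable_withDensity_iff_integrable_smul₀ hKmeas,
    integral_withDensity_eq_integral_smul₀ hKmeas] at hint hdiff
  exact ⟨hint, hdiff⟩

lemma IsPiecewiseAffine.isAffineSelection {p L : ℕ} {f : E p → E p} {Z : Fin L → Set (E p)}
    {φ : Fin L → E p} {Φ : Fin L → Matrix (Fin p) (Fin p) ℝ} (hf : IsPiecewiseAffine f Z φ Φ) :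
    IsAffineSelection f φ fun ℓ ↦ toEuclideanCLM (n := Fin p) (𝕜 := ℝ) (Φ ℓ) := by
  obtain ⟨-, -, -, hpart, haff⟩ := hf
  exact fun z ↦ (hpart z).exists.imp fun ℓ hℓ ↦ haff ℓ z hℓ

lemma exists_mem_convexHull_range_toEuclideanCLM_iff {p : ℕ} {ι : Type*}
    {Φ : ι → Matrix (Fin p) (Fin p) ℝ} {d y : E p} :
    (∃ M ∈ convexHull ℝ (range fun i ↦ toEuclideanCLM (n := Fin p) (𝕜 := ℝ) (Φ i)), y = M d) ↔
      ∃ M ∈ convexHull ℝ (range Φ), y = mulVecE M d := by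
  rw [range_comp' (toEuclideanCLM (n := Fin p) (𝕜 := ℝ)) Φ,
    ← IsLinearMap.image_convexHull ⟨map_add _, map_smul _⟩, exists_mem_image]
  rfl

/-- **Convex-hull mean-value property of smoothed piecewise affine maps** (display
`eq:fKdiff` in the proof of Proposition `prop:pwacondition`): for a piecewise affine `f` and an
integrable kernel `K` with `∫ K = 1` and `∫ ‖u‖ K(u) du < ∞`, the convolution
`f_K(z) = ∫ f(z + u) K(u) du` is well defined, and each difference `f_K(x″) − f_K(x′)` equals
`M (x″ − x′)` for some `M` in the convex hull of the regime matrices. -/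
theorem smoothed_piecewise_affine_convex_hull_difference
    (p L : ℕ) (hp : 1 ≤ p) (hL : 1 ≤ L)
    (f : E p → E p) (Z : Fin L → Set (E p)) (φ : Fin L → E p)
    (Φ : Fin L → Matrix (Fin p) (Fin p) ℝ)
    (hf : IsPiecewiseAffine f Z φ Φ)
    (K : E p → ℝ) (hKmeas : Measurable K) (hKpos : ∀ u, 0 ≤ K u)
    (hKone : (∫ u, K u) = 1)
    (hKnorm : Integrable fun u : E p => ‖u‖ * K u) :
    (∀ z : E p, Integrable fun u : E p => K u • f (z + u)) ∧
    ∀ x' x'' : E p, ∃ M ∈ convexHull ℝ (Set.range Φ),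
      (∫ u : E p, K u • f (x'' + u)) - (∫ u : E p, K u • f (x' + u))
        = mulVecE M (x'' - x') := by
  simpa only [exists_mem_convexHull_range_toEuclideanCLM_iff] using
    smoothed_piecewise_affine_convex_hull_difference_general hf.isAffineSelection hf.1 hKpos hKone
      hKnorm
end
end

section
/- Let G ≥ 2, let H, S ∈ ℝ^{G×G} be symmetric positive definite matrices, and let g : ℝ^G → ℝ^G be locally Lipschitz. Suppose that for Lebesgue-almost every w ∈ ℝ^G, g is differentiable at w with det Dg(w) > 0 and Dg(w) H⁻¹ Dg(w)ᵀ = S. Then g is affine: there exist a ∈ ℝ^G and M ∈ ℝ^{G×G} such that g(w) = a + Mw for all w ∈ ℝ^G. -/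
open MeasureTheory Matrix

noncomputable section

/-!
The Jacobian determinant is a null Lagrangian: `∫ det Dh = 0` for a compactly supported Lipschitz
map `h`. Indeed `∫ det (t + Dh)` over the support of `h` is a polynomial in `t` which, for large
`t`, equals `t ^ n` times the volume of the support, because `x ↦ x + t⁻¹ • h x` permutes the
support; its value at `t = 0` therefore vanishes.

Let `f` be Lipschitz with `f 0 = 0`, with `Df` orthogonal and `det Df = c` almost everywhere, and
let `ψ = (R² - ‖x‖²)₊`. Apply the above to `ψ f` and to `ψ x`: the function
`c⁻¹ det D(ψ f) - det D(ψ x)` has integral zero, but on the ball of radius `R` it equals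
`2 ψ ^ (n - 1) (‖x‖² - ⟪Df x, f x⟫)`, which is nonnegative because `f` is 1-Lipschitz. Hence
`⟪Df x, f x⟫ = ‖x‖²` almost everywhere, so `‖f x‖ = ‖x‖`. Since any point can serve as the
origin, `f` is an isometry, and therefore affine.

Writing `H⁻¹ = P Pᵀ` and `S = Q Qᵀ`, the map `f = Q⁻¹ ∘ g ∘ P` has orthogonal derivative, and
`det Dg > 0` forces `det Dg = √(det S / det H⁻¹)`, so that `det Df` is constant.
-/

open Module
open scoped NNReal

section Determinant

theorem det_eq_sum_lagrange_basis {K V ι : Type*} [Field K] [AddCommGroup V] [Module K V]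
    [FiniteDimensional K V] [DecidableEq ι] {s : Finset ι} {t : ι → K} (ht : Set.InjOn t s)
    (hs : finrank K V < s.card) (A : V →ₗ[K] V) :
    A.det = ∑ i ∈ s, (Lagrange.basis s t i).eval 0 * (t i • LinearMap.id + A).det := by
  have charpoly_eval (r : K) : (-A).charpoly.eval r = (r • LinearMap.id + A).det := by
    rw [LinearMap.eval_charpoly, sub_neg_eq_add]
    rfl
  have degree_lt : (-A).charpoly.degree < s.card :=
    Polynomial.degree_le_natDegree.trans_lt (by
      rw [LinearMap.charpoly_natDegree]
      exact_mod_cast hs)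
  have interpolation := congr_arg (Polynomial.eval 0) (Lagrange.eq_interpolate ht degree_lt)
  simpa [Lagrange.interpolate_apply, Polynomial.eval_finsetSum, charpoly_eval, mul_comm]
    using interpolation

theorem det_smul_id_add_smulRight {K V : Type*} [Field K] [AddCommGroup V] [Module K V]
    [FiniteDimensional K V] {r : K} (hr : r ≠ 0) (φ : V →ₗ[K] K) (v : V) :
    (r • LinearMap.id + φ.smulRight v).det = r ^ finrank K V * (1 + r⁻¹ * φ v) := by
  have factor : r • LinearMap.id + φ.smulRight v = r • LinearMap.transvection φ (r⁻¹ • v) := by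
    ext w
    simp [LinearMap.transvection.apply, smul_comm r, hr]
  rw [factor, LinearMap.det_smul, LinearMap.transvection.det, map_smul, smul_eq_mul]

variable {V : Type*} [NormedAddCommGroup V] [NormedSpace ℝ V] [FiniteDimensional ℝ V]

theorem det_id_add_pos_of_norm_lt_one {A : V →L[ℝ] V} (hA : ‖A‖ < 1) :
    0 < (ContinuousLinearMap.id ℝ V + A).det := by
  have det_ne_zero : ∀ t ∈ Set.Icc (0 : ℝ) 1, (1 - t • -A).det ≠ 0 := fun t ht ↦ by
    have : ‖t • -A‖ < 1 := by
      rw [norm_smul, norm_neg, Real.norm_of_nonneg ht.1]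
      nlinarith [norm_nonneg A, ht.2]
    exact ((isUnit_one_sub_of_norm_lt_one this).map
      (ContinuousLinearMap.toLinearMapRingHom (R₁ := ℝ) (M₁ := V))).map LinearMap.det |>.ne_zero
  have continuous_det : Continuous fun t : ℝ ↦ (1 - t • -A).det :=
    ContinuousLinearMap.continuous_det.comp (by fun_prop)
  by_contra! nonpos
  obtain ⟨t, ht, det_eq⟩ := intermediate_value_Icc' zero_le_one continuous_det.continuousOn
    ⟨by simpa using! nonpos, by simp [ContinuousLinearMap.det]⟩
  exact det_ne_zero t ht det_eq

end Determinant

section NullLagrangian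

theorem bijective_add_of_lipschitzWith {V : Type*} [NormedAddCommGroup V] [CompleteSpace V]
    {K : ℝ≥0} {h : V → V} (hh : LipschitzWith K h) (hK : K < 1) :
    Function.Bijective fun x ↦ x + h x := by
  refine ⟨(AntilipschitzWith.id.add_lipschitzWith hh (by simpa using hK)).injective, fun y ↦ ?_⟩
  have contracting : ContractingWith K fun x ↦ y - h x :=
    ⟨hK, by simpa using (LipschitzWith.const y).sub hh⟩
  have : Nonempty V := ⟨y⟩
  exact ⟨contracting.fixedPoint, eq_sub_iff_add_eq.1 contracting.fixedPoint_isFixedPt.symm⟩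

theorem image_eq_of_bijective_of_eqOn_compl {α : Type*} {F : α → α} {s : Set α}
    (hF : F.Bijective) (hs : Set.EqOn F id sᶜ) : F '' s = s := by
  rw [← compl_inj_iff, ← Set.image_compl_eq hF, hs.image_eq, Set.image_id]

theorem det_fderiv_eq_zero_of_notMem_tsupport {V : Type*} [NormedAddCommGroup V]
    [NormedSpace ℝ V] [FiniteDimensional ℝ V] [Nontrivial V] {h : V → V} {x : V}
    (hx : x ∉ tsupport h) : (fderiv ℝ h x).det = 0 := by
  rw [fderiv_of_notMem_tsupport ℝ hx]
  simp [ContinuousLinearMap.det]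

variable {V : Type*} [NormedAddCommGroup V] [NormedSpace ℝ V] [FiniteDimensional ℝ V]
  [MeasurableSpace V] [BorelSpace V] {μ : Measure V} {K : ℝ≥0} {f h : V → V} {s : Set V}

theorem integrableOn_det_smul_id_add_fderiv (hh : LipschitzWith K h) (hs : μ s ≠ ⊤) (t : ℝ) :
    IntegrableOn (fun x ↦ (t • ContinuousLinearMap.id ℝ V + fderiv ℝ h x).det) s μ := by
  have det_continuous :
      Continuous fun A : V →L[ℝ] V ↦ (t • ContinuousLinearMap.id ℝ V + A).det :=
    ContinuousLinearMap.continuous_det.comp (by fun_prop)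
  obtain ⟨C, hC⟩ := (isCompact_closedBall (0 : V →L[ℝ] V) K).exists_bound_of_continuousOn
    det_continuous.continuousOn
  refine Measure.integrableOn_of_bounded hs
    (det_continuous.measurable.comp (measurable_fderiv ℝ h)).aestronglyMeasurable
    (ae_of_all _ fun x ↦ hC _ ?_)
  simpa using norm_fderiv_le_of_lipschitz ℝ hh

theorem integrable_det_fderiv [IsFiniteMeasureOnCompacts μ] [Nontrivial V]
    (hh : LipschitzWith K h) (supp : HasCompactSupport h) :
    Integrable (fun x ↦ (fderiv ℝ h x).det) μ := by
  have := integrableOn_det_smul_id_add_fderiv hh (supp.isCompact.measure_ne_top (μ := μ)) 0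
  simp only [zero_smul, zero_add] at this
  refine (integrableOn_iff_integrable_of_support_subset ?_).1 this
  exact Function.support_subset_iff'.2 fun x hx ↦ det_fderiv_eq_zero_of_notMem_tsupport hx

variable [μ.IsAddHaarMeasure]

theorem addHaar_image_eq_zero_of_lipschitzWith (hf : LipschitzWith K f) (hs : μ s = 0) :
    μ (f '' s) = 0 := by
  have hausdorff_null : μH[finrank ℝ V] s = 0 :=
    Measure.absolutelyContinuous_isAddHaarMeasure _ μ hs
  refine Measure.absolutelyContinuous_isAddHaarMeasure μ μH[finrank ℝ V] ?_
  have := hf.hausdorffMeasure_image_le (d := finrank ℝ V) (Nat.cast_nonneg _) s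
  rwa [hausdorff_null, mul_zero, nonpos_iff_eq_zero] at this

theorem setIntegral_abs_det_fderiv_of_lipschitzWith (hf : LipschitzWith K f)
    (hinj : Set.InjOn f s) (hs : MeasurableSet s) :
    ∫ x in s, |(fderiv ℝ f x).det| ∂μ = μ.real (f '' s) := by
  set d : Set V := {x | DifferentiableAt ℝ f x}
  have compl_null : μ dᶜ = 0 := hf.ae_differentiableAt
  have domain_ae_eq : (s ∩ d : Set V) =ᵐ[μ] s :=
    inter_ae_eq_left_of_ae_eq_univ (ae_eq_univ.2 compl_null)
  have image_ae_eq : (f '' (s ∩ d) : Set V) =ᵐ[μ] f '' s := by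
    refine (Set.image_mono Set.inter_subset_left).eventuallyLE.antisymm
      (ae_le_set.2 (measure_mono_null ?_ (addHaar_image_eq_zero_of_lipschitzWith hf compl_null)))
    rw [← hinj.image_sdiff_subset Set.inter_subset_left]
    exact Set.image_mono fun x hx ↦ by grind
  calc ∫ x in s, |(fderiv ℝ f x).det| ∂μ
      = ∫ x in s ∩ d, |(fderiv ℝ f x).det| • (fun _ ↦ (1 : ℝ)) (f x) ∂μ := by
        simp only [smul_eq_mul, mul_one, setIntegral_congr_set domain_ae_eq]
    _ = ∫ _ in f '' (s ∩ d), (1 : ℝ) ∂μ :=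
        (integral_image_eq_integral_abs_det_fderiv_smul μ
          (hs.inter (measurableSet_of_differentiableAt ℝ f))
          (fun x hx ↦ hx.2.hasFDerivAt.hasFDerivWithinAt) (hinj.mono Set.inter_subset_left)
          (fun _ ↦ (1 : ℝ))).symm
    _ = μ.real (f '' s) := by simp [setIntegral_congr_set image_ae_eq]

theorem setIntegral_det_smul_id_add_fderiv (hh : LipschitzWith K h) {t : ℝ} (ht : K < t)
    (hs : MeasurableSet s) (supp : Function.support h ⊆ s) :
    ∫ x in s, (t • ContinuousLinearMap.id ℝ V + fderiv ℝ h x).det ∂μ =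
      t ^ finrank ℝ V * μ.real s := by
  have t_pos : 0 < t := K.2.trans_lt ht
  set F : V → V := fun x ↦ x + t⁻¹ • h x
  have lip : LipschitzWith (‖t⁻¹‖₊ * K) fun x ↦ t⁻¹ • h x := (lipschitzWith_smul t⁻¹).comp hh
  have lip_lt_one : ‖t⁻¹‖₊ * K < 1 := by
    rw [← NNReal.coe_lt_coe, NNReal.coe_mul, coe_nnnorm, Real.norm_of_nonneg (by positivity)]
    exact (inv_mul_lt_one₀ t_pos).2 ht
  have F_bijective : F.Bijective := bijective_add_of_lipschitzWith lip lip_lt_one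
  have F_image : F '' s = s := image_eq_of_bijective_of_eqOn_compl F_bijective fun x hx ↦ by
    simp [F, Function.notMem_support.1 fun hx' ↦ hx (supp hx')]
  have det_eq : ∀ᵐ x ∂μ, (t • ContinuousLinearMap.id ℝ V + fderiv ℝ h x).det =
      t ^ finrank ℝ V * |(fderiv ℝ F x).det| := by
    filter_upwards [hh.ae_differentiableAt] with x hx
    have F_deriv : fderiv ℝ F x = ContinuousLinearMap.id ℝ V + t⁻¹ • fderiv ℝ h x :=
      ((hasFDerivAt_id x).add (hx.hasFDerivAt.const_smul t⁻¹)).fderiv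
    have det_pos : 0 < (fderiv ℝ F x).det := by
      rw [F_deriv]
      refine det_id_add_pos_of_norm_lt_one (lt_of_le_of_lt ?_ lip_lt_one)
      rw [norm_smul]
      exact mul_le_mul_of_nonneg_left (norm_fderiv_le_of_lipschitz ℝ hh) (norm_nonneg _)
    rw [abs_of_pos det_pos, F_deriv, ContinuousLinearMap.det, ContinuousLinearMap.det,
      ← LinearMap.det_smul, ← ContinuousLinearMap.toLinearMap_smul, smul_add,
      smul_inv_smul₀ t_pos.ne']
  have F_lip : LipschitzWith (1 + ‖t⁻¹‖₊ * K) F := LipschitzWith.id.add lip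
  rw [integral_congr_ae (ae_restrict_of_ae det_eq), integral_const_mul,
    setIntegral_abs_det_fderiv_of_lipschitzWith F_lip F_bijective.injective.injOn hs, F_image]

theorem integral_det_fderiv_eq_zero [Nontrivial V] (hh : LipschitzWith K h)
    (supp : HasCompactSupport h) : ∫ x, (fderiv ℝ h x).det ∂μ = 0 := by
  set n := finrank ℝ V
  set s := tsupport h
  set t : ℕ → ℝ := fun i ↦ K + 1 + i
  set ℓ : ℕ → ℝ := fun i ↦ (Lagrange.basis (Finset.range (n + 1)) t i).eval 0
  have t_injOn : Set.InjOn t (Finset.range (n + 1)) := fun i _ j _ hij ↦ by simpa [t] using hij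
  have K_lt (i : ℕ) : K < t i := by simp only [t]; linarith [i.cast_nonneg (α := ℝ)]
  have interpolation (A : V →L[ℝ] V) :
      A.det = ∑ i ∈ Finset.range (n + 1), ℓ i * (t i • ContinuousLinearMap.id ℝ V + A).det :=
    det_eq_sum_lagrange_basis t_injOn (by simp [n]) (A : V →ₗ[ℝ] V)
  have weights : ∑ i ∈ Finset.range (n + 1), ℓ i * t i ^ n = 0 := by
    have := interpolation 0
    simpa [ContinuousLinearMap.det, finrank_pos.ne', n] using this.symm
  have scaled_volume (i : ℕ) :
      ∫ x in s, (t i • ContinuousLinearMap.id ℝ V + fderiv ℝ h x).det ∂μ = t i ^ n * μ.real s :=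
    setIntegral_det_smul_id_add_fderiv hh (K_lt i) (isClosed_tsupport h).measurableSet
      (subset_tsupport h)
  calc ∫ x, (fderiv ℝ h x).det ∂μ = ∫ x in s, (fderiv ℝ h x).det ∂μ :=
        (setIntegral_eq_integral_of_forall_compl_eq_zero fun x hx ↦
          det_fderiv_eq_zero_of_notMem_tsupport hx).symm
    _ = ∑ i ∈ Finset.range (n + 1),
          ℓ i * ∫ x in s, (t i • ContinuousLinearMap.id ℝ V + fderiv ℝ h x).det ∂μ := by
        simp_rw [fun x ↦ interpolation (fderiv ℝ h x), ← integral_const_mul]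
        exact integral_finsetSum _ fun i _ ↦ (integrableOn_det_smul_id_add_fderiv hh
          supp.isCompact.measure_ne_top (t i)).const_mul _
    _ = (∑ i ∈ Finset.range (n + 1), ℓ i * t i ^ n) * μ.real s := by
        simp_rw [scaled_volume, Finset.sum_mul, mul_assoc]
    _ = 0 := by rw [weights, zero_mul]

end NullLagrangian

section Lipschitz

theorem norm_sub_le_of_ae_norm_deriv_le {W : Type*} [NormedAddCommGroup W] [NormedSpace ℝ W]
    {φ : ℝ → W} {C : ℝ} (hφ : LocallyLipschitz φ)
    (bound : ∀ᵐ t, DifferentiableAt ℝ φ t ∧ ‖deriv φ t‖ ≤ C) (a b : ℝ) :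
    ‖φ b - φ a‖ ≤ C * |b - a| := by
  obtain ⟨ℓ, ℓ_norm, ℓ_apply⟩ := exists_dual_vector'' ℝ (φ b - φ a)
  obtain ⟨K, lip⟩ := (ℓ.lipschitz.locallyLipschitz.comp hφ).locallyLipschitzOn
    |>.exists_lipschitzOnWith_of_compact (isCompact_uIcc (a := a) (b := b))
  calc ‖φ b - φ a‖ = ℓ (φ b) - ℓ (φ a) := by rw [← map_sub, ℓ_apply, RCLike.ofReal_real_eq_id, id]
    _ = ∫ t in a..b, deriv (ℓ ∘ φ) t :=
        lip.absolutelyContinuousOnInterval.integral_deriv_eq_sub.symm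
    _ ≤ ‖∫ t in a..b, deriv (ℓ ∘ φ) t‖ := Real.le_norm_self _
    _ ≤ C * |b - a| := by
      refine intervalIntegral.norm_integral_le_of_norm_le_const_ae ?_
      filter_upwards [bound] with t ⟨differentiable, deriv_le⟩ _
      rw [(ℓ.hasFDerivAt.comp_hasDerivAt t differentiable.hasDerivAt).deriv]
      exact (ℓ.le_of_opNorm_le ℓ_norm _).trans (by rwa [one_mul])

variable {V W : Type*} [NormedAddCommGroup V] [NormedSpace ℝ V] [FiniteDimensional ℝ V]
  [MeasurableSpace V] [BorelSpace V] {μ : Measure V} [μ.IsAddHaarMeasure]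
  [NormedAddCommGroup W] [NormedSpace ℝ W]

theorem ae_ae_add_smul {p : V → Prop} (hp : ∀ᵐ z ∂μ, p z) (v : V) :
    ∀ᵐ z ∂μ, ∀ᵐ t : ℝ, p (z + t • v) := by
  have translate (t : ℝ) : Measure.QuasiMeasurePreserving (fun z ↦ z + t • v) μ μ :=
    (measurePreserving_add_right μ (t • v)).quasiMeasurePreserving
  exact Measure.ae_ae_of_ae_prod <| (QuasiMeasurePreserving.prod_of_left
    (f := fun q : V × ℝ ↦ q.1 + q.2 • v) (by fun_prop) (ae_of_all volume translate)).ae hp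

theorem lipschitzWith_of_ae_norm_fderiv_le {f : V → W} {C : ℝ≥0} (hf : LocallyLipschitz f)
    (bound : ∀ᵐ x ∂μ, DifferentiableAt ℝ f x ∧ ‖fderiv ℝ f x‖ ≤ C) : LipschitzWith C f := by
  have increment_le (v : V) : ∀ᵐ z ∂μ, ‖f (z + v) - f z‖ ≤ C * ‖v‖ := by
    filter_upwards [ae_ae_add_smul bound v] with z hz
    have line_deriv (t : ℝ) : HasDerivAt (fun t : ℝ ↦ z + t • v) v t := by
      simpa using ((hasDerivAt_id t).smul_const v).const_add z
    have line_lip : LocallyLipschitz fun t : ℝ ↦ z + t • v :=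
      ContDiff.locallyLipschitz (𝕂 := ℝ) (by fun_prop)
    have := norm_sub_le_of_ae_norm_deriv_le (C := C * ‖v‖) (hf.comp line_lip) (hz.mono
      fun t ⟨differentiable, fderiv_le⟩ ↦ by
        have comp_deriv := differentiable.hasFDerivAt.comp_hasDerivAt t (line_deriv t)
        refine ⟨comp_deriv.differentiableAt, ?_⟩
        rw [comp_deriv.deriv]
        exact ContinuousLinearMap.le_of_opNorm_le _ fderiv_le v) 0 1
    simpa using this
  have increment_le_everywhere (v z : V) : ‖f (z + v) - f z‖ ≤ C * ‖v‖ := by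
    have closed : IsClosed {z | ‖f (z + v) - f z‖ ≤ C * ‖v‖} := by
      have := hf.continuous
      exact isClosed_le (by fun_prop) continuous_const
    exact closed.closure_subset (Measure.dense_of_ae (increment_le v) z)
  refine LipschitzWith.of_dist_le_mul fun x y ↦ ?_
  simpa [dist_eq_norm] using increment_le_everywhere (x - y) y

end Lipschitz

section Cutoff

variable {V : Type*} [NormedAddCommGroup V] {R : ℝ} {x : V}

/-- The cutoff function `(R² - ‖x‖²)₊` supported in the ball of radius `R` about the origin; its
derivative there is `-2⟪x, ·⟫`, which pairs the radial direction with the map being cut off. -/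
def radialCutoff (R : ℝ) (x : V) : ℝ := R ^ 2 - min ‖x‖ R ^ 2

theorem radialCutoff_of_norm_le (hx : ‖x‖ ≤ R) : radialCutoff R x = R ^ 2 - ‖x‖ ^ 2 := by
  rw [radialCutoff, min_eq_left hx]

theorem radialCutoff_of_le_norm (hx : R ≤ ‖x‖) : radialCutoff R x = 0 := by
  rw [radialCutoff, min_eq_right hx, sub_self]

theorem radialCutoff_pos (hx : ‖x‖ < R) : 0 < radialCutoff R x := by
  rw [radialCutoff_of_norm_le hx.le]
  nlinarith [norm_nonneg x]

theorem hasFDerivAt_radialCutoff [InnerProductSpace ℝ V] (hx : ‖x‖ < R) :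
    HasFDerivAt (radialCutoff R) (-(2 • innerSL ℝ x)) x := by
  refine ((hasStrictFDerivAt_norm_sq x).hasFDerivAt.const_sub (R ^ 2)).congr_of_eventuallyEq ?_
  filter_upwards [(continuous_norm.tendsto x).eventually_lt_const hx] with y hy
  exact radialCutoff_of_norm_le hy.le

theorem abs_radialCutoff_sub_le (hR : 0 ≤ R) (x y : V) :
    |radialCutoff R x - radialCutoff R y| ≤ 2 * R * ‖x - y‖ := by
  have min_lip : |min ‖x‖ R - min ‖y‖ R| ≤ ‖x - y‖ := by
    simpa [Real.dist_eq, dist_eq_norm] using (lipschitzWith_one_norm.min_const R).dist_le_mul x y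
  calc |radialCutoff R x - radialCutoff R y|
      = |min ‖x‖ R + min ‖y‖ R| * |min ‖x‖ R - min ‖y‖ R| := by
        rw [← abs_mul, ← abs_neg, radialCutoff, radialCutoff]
        congr 1
        ring
    _ ≤ 2 * R * ‖x - y‖ := by
        gcongr
        rw [abs_of_nonneg (by positivity), two_mul]
        exact add_le_add (min_le_right _ _) (min_le_right _ _)

theorem lipschitzWith_radialCutoff_smul [NormedSpace ℝ V] {R : ℝ≥0} {f : V → V}
    (hf : LipschitzWith 1 f) (hf0 : f 0 = 0) :
    LipschitzWith (3 * R ^ 2) fun x ↦ radialCutoff (R : ℝ) x • f x := by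
  have norm_le (x : V) : ‖f x‖ ≤ ‖x‖ := by simpa [hf0] using hf.norm_sub_le x 0
  refine LipschitzWith.of_dist_le_mul fun x y ↦ ?_
  wlog order : ‖x‖ ≤ ‖y‖ generalizing x y
  · simpa only [dist_comm] using this y x (le_of_not_ge order)
  rcases le_or_gt (R : ℝ) ‖x‖ with outside | inside
  · rw [radialCutoff_of_le_norm outside, radialCutoff_of_le_norm (outside.trans order)]
    simpa using by positivity
  have cutoff_le : |radialCutoff (R : ℝ) y| ≤ R ^ 2 := by
    rw [radialCutoff, abs_of_nonneg (sub_nonneg.2 (by gcongr; exact min_le_right _ _))]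
    exact sub_le_self _ (by positivity)
  calc dist (radialCutoff (R : ℝ) x • f x) (radialCutoff (R : ℝ) y • f y)
      = ‖radialCutoff (R : ℝ) y • (f x - f y) +
          (radialCutoff (R : ℝ) x - radialCutoff (R : ℝ) y) • f x‖ := by
        rw [dist_eq_norm]
        congr 1
        module
    _ ≤ |radialCutoff (R : ℝ) y| * ‖f x - f y‖ +
          |radialCutoff (R : ℝ) x - radialCutoff (R : ℝ) y| * ‖f x‖ := by
        simpa only [norm_smul, Real.norm_eq_abs] using norm_add_le
          (radialCutoff (R : ℝ) y • (f x - f y))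
          ((radialCutoff (R : ℝ) x - radialCutoff (R : ℝ) y) • f x)
    _ ≤ R ^ 2 * ‖x - y‖ + 2 * R * ‖x - y‖ * R := by
        gcongr
        · simpa using hf.norm_sub_le x y
        · exact abs_radialCutoff_sub_le R.2 x y
        · exact (norm_le x).trans inside.le
    _ = ((3 * R ^ 2 : ℝ≥0) : ℝ) * dist x y := by
        rw [dist_eq_norm]
        push_cast
        ring

theorem tsupport_radialCutoff_smul_subset [NormedSpace ℝ V] (f : V → V) :
    tsupport (fun x ↦ radialCutoff R x • f x) ⊆ Metric.closedBall 0 R := by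
  refine closure_minimal (fun x hx ↦ ?_) Metric.isClosed_closedBall
  rw [mem_closedBall_zero_iff]
  contrapose! hx
  rw [Function.notMem_support, radialCutoff_of_le_norm hx.le, zero_smul]

theorem hasCompactSupport_radialCutoff_smul [NormedSpace ℝ V] [ProperSpace V] (f : V → V) :
    HasCompactSupport fun x ↦ radialCutoff R x • f x :=
  (isCompact_closedBall 0 R).of_isClosed_subset (isClosed_tsupport _)
    (tsupport_radialCutoff_smul_subset f)

end Cutoff

section Isometry

variable {V : Type*} [NormedAddCommGroup V] [InnerProductSpace ℝ V]
  [FiniteDimensional ℝ V]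

theorem det_fderiv_radialCutoff_smul {R : ℝ} {f : V → V} {x : V} (hx : ‖x‖ < R)
    (hf : DifferentiableAt ℝ f x) (unitary_fderiv : fderiv ℝ f x ∈ unitary (V →L[ℝ] V)) :
    (fderiv ℝ (fun y ↦ radialCutoff R y • f y) x).det =
      (fderiv ℝ f x).det * (radialCutoff R x ^ finrank ℝ V *
        (1 - (radialCutoff R x)⁻¹ * (2 * inner ℝ (fderiv ℝ f x x) (f x)))) := by
  set ψ := radialCutoff R x
  set A := fderiv ℝ f x
  set φ : V →L[ℝ] ℝ := -(2 • innerSL ℝ x)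
  have apply_star : A (star A (f x)) = f x :=
    DFunLike.congr_fun (Unitary.mul_star_self_of_mem unitary_fderiv) (f x)
  have product_rule : fderiv ℝ (fun y ↦ radialCutoff R y • f y) x =
      A * (ψ • ContinuousLinearMap.id ℝ V + φ.smulRight (star A (f x))) := by
    refine ((hasFDerivAt_radialCutoff hx).smul hf.hasFDerivAt).fderiv.trans ?_
    ext v
    simp [apply_star, φ, ψ, A]
  have pairing : φ (star A (f x)) = -(2 * inner ℝ (A x) (f x)) := by
    simp [φ, ContinuousLinearMap.star_eq_adjoint, ContinuousLinearMap.adjoint_inner_right]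
  have rank_one :=
    det_smul_id_add_smulRight (radialCutoff_pos hx).ne' (φ : V →ₗ[ℝ] ℝ) (star A (f x))
  calc (fderiv ℝ (fun y ↦ radialCutoff R y • f y) x).det
      = A.det * (ψ • ContinuousLinearMap.id ℝ V + φ.smulRight (star A (f x))).det := by
        rw [product_rule]
        exact LinearMap.det_comp _ _
    _ = A.det * (ψ ^ finrank ℝ V * (1 + ψ⁻¹ * φ (star A (f x)))) := congr_arg _ rank_one
    _ = _ := by rw [pairing]; ring

theorem det_fderiv_radialCutoff_smul_of_lt_norm [Nontrivial V] {R : ℝ} {x : V} (hx : R < ‖x‖)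
    (f : V → V) : (fderiv ℝ (fun y ↦ radialCutoff R y • f y) x).det = 0 :=
  det_fderiv_eq_zero_of_notMem_tsupport fun mem ↦
    hx.not_ge (mem_closedBall_zero_iff.1 (tsupport_radialCutoff_smul_subset f mem))

theorem det_ne_zero_of_mem_unitary {A : V →L[ℝ] V} (hA : A ∈ unitary (V →L[ℝ] V)) :
    A.det ≠ 0 :=
  ((Unitary.toUnits ⟨A, hA⟩).isUnit.map
    (ContinuousLinearMap.toLinearMapRingHom (R₁ := ℝ) (M₁ := V))).map LinearMap.det |>.ne_zero

theorem inner_map_le_norm_sq_of_mem_unitary {A : V →L[ℝ] V} (hA : A ∈ unitary (V →L[ℝ] V))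
    {x y : V} (hy : ‖y‖ ≤ ‖x‖) : inner ℝ (A x) y ≤ ‖x‖ ^ 2 :=
  calc inner ℝ (A x) y ≤ ‖A x‖ * ‖y‖ := real_inner_le_norm _ _
    _ ≤ ‖x‖ * ‖x‖ := by
      rw [A.norm_map_of_mem_unitary hA]
      gcongr
    _ = ‖x‖ ^ 2 := (sq _).symm

theorem inv_det_mul_det_fderiv_radialCutoff_smul_sub {R : ℝ} {f : V → V} {x : V} (hx : ‖x‖ < R)
    (hf : DifferentiableAt ℝ f x) (unitary_fderiv : fderiv ℝ f x ∈ unitary (V →L[ℝ] V)) :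
    (fderiv ℝ f x).det⁻¹ * (fderiv ℝ (fun y ↦ radialCutoff R y • f y) x).det -
        (fderiv ℝ (fun y ↦ radialCutoff R y • y) x).det =
      2 * radialCutoff R x ^ finrank ℝ V * (radialCutoff R x)⁻¹ *
        (‖x‖ ^ 2 - inner ℝ (fderiv ℝ f x x) (f x)) := by
  have det_id : (fderiv ℝ (fun y ↦ radialCutoff R y • y) x).det =
      radialCutoff R x ^ finrank ℝ V * (1 - (radialCutoff R x)⁻¹ * (2 * ‖x‖ ^ 2)) := by
    have := det_fderiv_radialCutoff_smul (f := id) hx differentiableAt_id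
      (by rw [fderiv_id]; exact one_mem _)
    simpa [ContinuousLinearMap.det] using this
  rw [det_id, det_fderiv_radialCutoff_smul hx hf unitary_fderiv,
    inv_mul_cancel_left₀ (det_ne_zero_of_mem_unitary unitary_fderiv)]
  ring

variable [MeasurableSpace V] [BorelSpace V] {μ : Measure V} [μ.IsAddHaarMeasure] {f : V → V}
  {c : ℝ}

theorem ae_nonneg_inv_mul_det_fderiv_radialCutoff_smul_sub [Nontrivial V]
    (hf : LipschitzWith 1 f) (hf0 : f 0 = 0)
    (hDf : ∀ᵐ x ∂μ, fderiv ℝ f x ∈ unitary (V →L[ℝ] V) ∧ (fderiv ℝ f x).det = c) (R : ℝ) :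
    0 ≤ᵐ[μ] fun x ↦ c⁻¹ * (fderiv ℝ (fun y ↦ radialCutoff R y • f y) x).det -
      (fderiv ℝ (fun y ↦ radialCutoff R y • y) x).det := by
  filter_upwards [hDf, hf.ae_differentiableAt, measure_eq_zero_iff_ae_notMem.1
    (Measure.addHaar_sphere μ 0 R)] with x ⟨unitary_fderiv, det_eq⟩ differentiable off_sphere
  rw [Pi.zero_apply]
  rcases lt_trichotomy ‖x‖ R with inside | on_sphere | outside
  · rw [← det_eq, inv_det_mul_det_fderiv_radialCutoff_smul_sub inside differentiable unitary_fderiv]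
    have cutoff_pos := radialCutoff_pos inside
    have inner_le := inner_map_le_norm_sq_of_mem_unitary unitary_fderiv
      (by simpa [hf0] using hf.norm_sub_le x 0)
    exact mul_nonneg (by positivity) (sub_nonneg.2 inner_le)
  · exact (off_sphere (by simpa using on_sphere)).elim
  · rw [det_fderiv_radialCutoff_smul_of_lt_norm outside f,
      det_fderiv_radialCutoff_smul_of_lt_norm outside fun y ↦ y, mul_zero, sub_zero]

theorem ae_inner_fderiv_self_eq_norm_sq [Nontrivial V] (hf : LipschitzWith 1 f) (hf0 : f 0 = 0)
    (hDf : ∀ᵐ x ∂μ, fderiv ℝ f x ∈ unitary (V →L[ℝ] V) ∧ (fderiv ℝ f x).det = c) (R : ℝ≥0) :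
    ∀ᵐ x ∂μ, ‖x‖ < R → inner ℝ (fderiv ℝ f x x) (f x) = ‖x‖ ^ 2 := by
  set F : V → V := fun x ↦ radialCutoff (R : ℝ) x • f x
  set I : V → V := fun x ↦ radialCutoff (R : ℝ) x • x
  have F_lip : LipschitzWith (3 * R ^ 2) F := lipschitzWith_radialCutoff_smul hf hf0
  have I_lip : LipschitzWith (3 * R ^ 2) I := lipschitzWith_radialCutoff_smul LipschitzWith.id rfl
  have F_supp : HasCompactSupport F := hasCompactSupport_radialCutoff_smul f
  have I_supp : HasCompactSupport I := hasCompactSupport_radialCutoff_smul id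
  have F_integrable := (integrable_det_fderiv (μ := μ) F_lip F_supp).const_mul c⁻¹
  have I_integrable := integrable_det_fderiv (μ := μ) I_lip I_supp
  have integral_eq_zero : ∫ x, c⁻¹ * (fderiv ℝ F x).det - (fderiv ℝ I x).det ∂μ = 0 := by
    rw [integral_sub F_integrable I_integrable, integral_const_mul,
      integral_det_fderiv_eq_zero F_lip F_supp, integral_det_fderiv_eq_zero I_lip I_supp,
      mul_zero, sub_zero]
  have integrand_eq_zero := (integral_eq_zero_iff_of_nonneg_ae
    (ae_nonneg_inv_mul_det_fderiv_radialCutoff_smul_sub hf hf0 hDf R)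
    (F_integrable.sub I_integrable)).1 integral_eq_zero
  filter_upwards [integrand_eq_zero, hDf, hf.ae_differentiableAt]
    with x eq_zero ⟨unitary_fderiv, det_eq⟩ differentiable hx
  have cutoff_pos := radialCutoff_pos hx
  rw [Pi.zero_apply, ← det_eq,
    inv_det_mul_det_fderiv_radialCutoff_smul_sub hx differentiable unitary_fderiv] at eq_zero
  exact (sub_eq_zero.1 ((mul_eq_zero.1 eq_zero).resolve_left (by positivity))).symm

theorem norm_map_of_ae_fderiv_mem_unitary [Nontrivial V] (hf : LipschitzWith 1 f) (hf0 : f 0 = 0)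
    (hDf : ∀ᵐ x ∂μ, fderiv ℝ f x ∈ unitary (V →L[ℝ] V) ∧ (fderiv ℝ f x).det = c) (x : V) :
    ‖f x‖ = ‖x‖ := by
  have norm_eq_ae : (fun x ↦ ‖f x‖) =ᵐ[μ] fun x ↦ ‖x‖ := by
    filter_upwards [hDf, ae_all_iff.2 fun n : ℕ ↦ ae_inner_fderiv_self_eq_norm_sq hf hf0 hDf n]
      with x ⟨unitary_fderiv, _⟩ inner_eq
    obtain ⟨n, hn⟩ := exists_nat_gt ‖x‖
    refine le_antisymm (by simpa [hf0] using hf.norm_sub_le x 0) ?_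
    have cauchy_schwarz : ‖x‖ * ‖x‖ ≤ ‖x‖ * ‖f x‖ := by
      calc ‖x‖ * ‖x‖ = inner ℝ (fderiv ℝ f x x) (f x) := by rw [inner_eq n hn, sq]
        _ ≤ ‖fderiv ℝ f x x‖ * ‖f x‖ := real_inner_le_norm _ _
        _ = ‖x‖ * ‖f x‖ := by
          rw [(fderiv ℝ f x).norm_map_of_mem_unitary unitary_fderiv]
    rcases (norm_nonneg x).eq_or_lt with norm_zero | norm_pos
    · rw [← norm_zero]
      exact norm_nonneg _
    · exact le_of_mul_le_mul_left cauchy_schwarz norm_pos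
  exact congr_fun ((hf.continuous.norm.ae_eq_iff_eq μ continuous_norm).1 norm_eq_ae) x

theorem isometry_of_ae_fderiv_mem_unitary (hf : LocallyLipschitz f)
    (hDf : ∀ᵐ x ∂μ, fderiv ℝ f x ∈ unitary (V →L[ℝ] V) ∧ (fderiv ℝ f x).det = c) :
    Isometry f := by
  nontriviality V using isometry_subsingleton
  have lip : LipschitzWith 1 f := lipschitzWith_of_ae_norm_fderiv_le hf <| by
    filter_upwards [hDf] with x ⟨unitary_fderiv, _⟩
    refine ⟨differentiableAt_of_fderiv_injective ?_, ?_⟩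
    · exact (AddMonoidHomClass.isometry_of_norm _
        ((fderiv ℝ f x).norm_map_of_mem_unitary unitary_fderiv)).injective
    · exact CStarRing.norm_of_mem_unitary unitary_fderiv |>.le
  refine Isometry.of_dist_eq fun x y ↦ ?_
  have translated := norm_map_of_ae_fderiv_mem_unitary (μ := μ) (c := c)
    (f := fun z ↦ f (z + y) - f y) ?_ (by simp) ?_ (x - y)
  · simpa [dist_eq_norm] using translated
  · simpa using (lip.comp (LipschitzWith.id.add (LipschitzWith.const y))).sub
      (LipschitzWith.const (f y))
  · simpa [fderiv_sub_const, fderiv_comp_add_right] using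
      (measurePreserving_add_right μ y).quasiMeasurePreserving.ae hDf

theorem exists_eq_add_map_of_ae_fderiv_mem_unitary {P Q : (V →L[ℝ] V)ˣ} {g : V → V} {d : ℝ}
    (hg : LocallyLipschitz g) (hDg : ∀ᵐ x ∂μ, ↑Q⁻¹ * fderiv ℝ g x * ↑P ∈ unitary (V →L[ℝ] V) ∧
      (fderiv ℝ g x).det = d) :
    ∃ L : V →L[ℝ] V, ∀ x, g x = g 0 + L x := by
  let P' := ContinuousLinearEquiv.unitsEquiv ℝ V P
  let Q' := ContinuousLinearEquiv.unitsEquiv ℝ V Q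
  set f : V → V := Q'.symm ∘ g ∘ P'
  have f_fderiv (x : V) : fderiv ℝ f x = ↑Q⁻¹ * fderiv ℝ g (P' x) * ↑P := by
    rw [Q'.symm.comp_fderiv, P'.comp_right_fderiv]
    rfl
  have f_lip : LocallyLipschitz f :=
    Q'.symm.lipschitz.locallyLipschitz.comp (hg.comp P'.lipschitz.locallyLipschitz)
  have P_preserving : Measure.QuasiMeasurePreserving P' μ μ :=
    Measure.ContinuousLinearMap.quasiMeasurePreserving μ (P : V →L[ℝ] V)
      (LinearEquiv.isUnit_det' P'.toLinearEquiv).ne_zero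
  have f_isometry : Isometry f := isometry_of_ae_fderiv_mem_unitary (μ := μ)
    (c := (↑Q⁻¹ : V →L[ℝ] V).det * d * (P : V →L[ℝ] V).det) f_lip <| by
      filter_upwards [P_preserving.ae hDg] with x ⟨unitary_fderiv, det_eq⟩
      rw [f_fderiv]
      refine ⟨unitary_fderiv, ?_⟩
      rw [← det_eq]
      simp only [ContinuousLinearMap.det, ← LinearMap.det_comp]
      rfl
  let Φ := f_isometry.affineIsometryOfStrictConvexSpace
  refine ⟨Q * Φ.linearIsometry.toContinuousLinearMap * ↑P⁻¹, fun x ↦ ?_⟩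
  have Φ_apply : Φ (P'.symm x) = Φ.linearIsometry (P'.symm x) + Φ 0 := by
    simpa using Φ.map_vadd 0 (P'.symm x)
  have Q_Φ (y : V) : Q' (Φ y) = g (P' y) := Q'.apply_symm_apply _
  calc g x = Q' (Φ (P'.symm x)) := by rw [Q_Φ, P'.apply_symm_apply]
    _ = Q' (Φ 0) + Q' (Φ.linearIsometry (P'.symm x)) := by rw [Φ_apply, map_add, add_comm]
    _ = g 0 + Q' (Φ.linearIsometry (P'.symm x)) := by rw [Q_Φ, map_zero]

end Isometry

section Matrix

variable {𝕜 n : Type*} [RCLike 𝕜] [Fintype n] [DecidableEq n]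

open scoped ComplexOrder MatrixOrder in
theorem exists_eq_units_mul_star_of_posDef {S : Matrix n n 𝕜} (hS : S.PosDef) :
    ∃ Q : (Matrix n n 𝕜)ˣ, S = Q * star (Q : Matrix n n 𝕜) := by
  obtain ⟨_, ⟨Q, rfl⟩, hQ⟩ :=
    CStarAlgebra.isStrictlyPositive_iff_eq_mul_star_self.1 hS.isStrictlyPositive
  exact ⟨Q, hQ⟩

theorem det_eq_sqrt_of_mul_mul_transpose_eq {A J S : Matrix n n ℝ} (hA : A.det ≠ 0)
    (hJ : 0 < J.det) (h : J * A * Jᵀ = S) : J.det = √(S.det / A.det) := by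
  rw [← h, Matrix.det_mul, Matrix.det_mul, Matrix.det_transpose, mul_right_comm,
    mul_div_cancel_right₀ _ hA, Real.sqrt_mul_self hJ.le]

theorem inv_mul_mul_mem_unitary {R : Type*} [Monoid R] [StarMul R] [IsDedekindFiniteMonoid R]
    {P J : R} {Q : Rˣ} (h : J * (P * star P) * star J = Q * star (Q : R)) :
    ((Q⁻¹ : Rˣ) : R) * J * P ∈ unitary R := by
  have mul_star_self : ((Q⁻¹ : Rˣ) : R) * J * P * star (((Q⁻¹ : Rˣ) : R) * J * P) = 1 := by
    calc _ = ((Q⁻¹ : Rˣ) : R) * (J * (P * star P) * star J) * star ((Q⁻¹ : Rˣ) : R) := by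
          simp only [star_mul, mul_assoc]
      _ = 1 := by
          rw [h, Units.inv_mul_cancel_left, ← star_mul, Units.inv_mul, star_one]
  exact Unitary.mem_iff.2 ⟨mul_eq_one_symm mul_star_self, mul_star_self⟩

theorem det_toEuclideanCLM (A : Matrix n n 𝕜) :
    (Matrix.toEuclideanCLM (𝕜 := 𝕜) A).det = A.det :=
  LinearMap.det_toLpLin _ _

end Matrix

/-- **Rigidity step in the proof of Theorem `thm:matzkin`**: if `H` and `S` are symmetric
positive definite and the locally Lipschitz map `g` satisfies, almost everywhere,
`det Dg(w) > 0` and `Dg(w) H⁻¹ Dg(w)ᵀ = S`, then `g` is affine. -/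
theorem ae_congruence_constraint_affine
    (G : ℕ) (hG : 2 ≤ G)
    (H S : Matrix (Fin G) (Fin G) ℝ) (hH : H.PosDef) (hS : S.PosDef)
    (g : E G → E G) (hg : LocallyLipschitz g)
    (hDg : ∀ᵐ w : E G, DifferentiableAt ℝ g w ∧
      ∃ J : Matrix (Fin G) (Fin G) ℝ, (∀ v : E G, fderiv ℝ g w v = mulVecE J v) ∧
        0 < J.det ∧ J * H⁻¹ * Jᵀ = S) :
    ∃ (a : E G) (M : Matrix (Fin G) (Fin G) ℝ), ∀ w : E G, g w = a + mulVecE M w := by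
  obtain ⟨P, hP⟩ := exists_eq_units_mul_star_of_posDef hH.inv
  obtain ⟨Q, hQ⟩ := exists_eq_units_mul_star_of_posDef hS
  let Φ : Matrix (Fin G) (Fin G) ℝ ≃⋆ₐ[ℝ] (E G →L[ℝ] E G) := Matrix.toEuclideanCLM (𝕜 := ℝ)
  obtain ⟨L, hL⟩ := exists_eq_add_map_of_ae_fderiv_mem_unitary (μ := volume)
    (P := Units.map Φ P) (Q := Units.map Φ Q) (d := √(S.det / H⁻¹.det)) hg <| by
      filter_upwards [hDg] with w ⟨_, J, fderiv_apply, det_pos, congruence⟩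
      have fderiv_eq : fderiv ℝ g w = Φ J := ContinuousLinearMap.ext fderiv_apply
      have orthogonal := inv_mul_mul_mem_unitary (P := P.val) (Q := Q) (J := J)
        (by rw [← hP, ← hQ]; exact congruence)
      rw [fderiv_eq]
      refine ⟨?_, ?_⟩
      · simpa using Unitary.map_mem Φ orthogonal
      · rw [det_toEuclideanCLM]
        exact det_eq_sqrt_of_mul_mul_transpose_eq hH.inv.det_pos.ne' det_pos congruence
  refine ⟨g 0, Φ.symm L, fun w ↦ ?_⟩
  have mulVecE_eq : mulVecE (Φ.symm L) w = Φ (Φ.symm L) w := rfl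
  rw [mulVecE_eq, Φ.apply_symm_apply, hL]
end
end
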